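/- For all integers w, p0, p1, p2, every positive integer ℓ, and every nonnegative integer u, one has G(w,u,ℓ;p0,p1,p2) = 0. -/

import Mathlib

open Finset

noncomputable section

/-- The field `ℚ(q)` of rational functions over `ℚ`. -/
abbrev F : Type := RatFunc ℚ

/-- The indeterminate `q`. -/
noncomputable def qq : F := RatFunc.X

/-- The quantum integer `[n]` with base `v`: `(v^n - v^(-n))/(v - v⁻¹)`. -/
noncomputable def qint (v : F) (n : ℤ) : F := (v ^ n - v ^ (-n)) / (v - v⁻¹)

/-- The quantum factorial `[m]! = [1][2]⋯[m]` with base `v`. -/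
noncomputable def qfact (v : F) (m : ℕ) : F := ∏ k ∈ range m, qint v ((k : ℤ) + 1)

/-- The quantum binomial coefficient `C_v(n,d) = [n][n-1]⋯[n-d+1]/[d]!` for `d ≥ 0`,
and `0` for `d < 0`. -/
noncomputable def qbinom (v : F) (n d : ℤ) : F :=
  if d < 0 then 0
  else (∏ k ∈ range d.toNat, qint v (n - (k : ℤ))) / qfact v d.toNat

/-- The function `G(w,u,ℓ;p0,p1,p2)` of [CLW, (5.1)]. -/
noncomputable def G (w : ℤ) (u ℓ : ℕ) (p0 p1 p2 : ℤ) : F :=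
  (-1 : F) ^ w * qq ^ ((u : ℤ) ^ 2 - w * (u : ℤ) + (ℓ : ℤ) * (u : ℤ)) *
  ((∑ c ∈ range (u + 1), ∑ e ∈ range (u + 1 - c), ∑ t ∈ range (ℓ + 1),
      (let r : ℕ := u - c - e;
       if Even ((t : ℤ) + w - (r : ℤ)) then
         qq ^ (-(t : ℤ) * ((ℓ : ℤ) + (u : ℤ) - 1) - (u : ℤ) * ((c : ℤ) + (e : ℤ)) + 2 * (c : ℤ)
               + (r : ℤ) * p0 + 2 * (c : ℤ) * p1 + 2 * (e : ℤ) * p2)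
           * qbinom qq (ℓ : ℤ) (t : ℤ) * qbinom qq (w + (t : ℤ) + p0) (r : ℤ)
           * qbinom (qq ^ 2) ((w + (t : ℤ) - (r : ℤ)) / 2 + p1) (c : ℤ)
           * qbinom (qq ^ 2) ((w + (t : ℤ) - (r : ℤ)) / 2 + p2) (e : ℤ)
       else 0))
  - (∑ c ∈ range (u + 1), ∑ e ∈ range (u + 1 - c), ∑ t ∈ range (ℓ + 1),
      (let r : ℕ := u - c - e;
       if ¬ Even ((t : ℤ) + w - (r : ℤ)) then
         qq ^ (-(t : ℤ) * ((ℓ : ℤ) + (u : ℤ) - 1) - ((u : ℤ) - 1) * ((c : ℤ) + (e : ℤ))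
               + (r : ℤ) * p0 + 2 * (c : ℤ) * p1 + 2 * (e : ℤ) * p2)
           * qbinom qq (ℓ : ℤ) (t : ℤ) * qbinom qq (w + (t : ℤ) + p0) (r : ℤ)
           * qbinom (qq ^ 2) (1 + (w + (t : ℤ) - (r : ℤ) - 1) / 2 + p1) (c : ℤ)
           * qbinom (qq ^ 2) ((w + (t : ℤ) - (r : ℤ) - 1) / 2 + p2) (e : ℤ)
       else 0)))

theorem qq_ne : qq ≠ 0 := RatFunc.X_ne_zero

theorem qq_pow_ne_one (n : ℕ) (hn : 0 < n) : qq ^ n ≠ 1 := by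
  intro h
  have h2 : (algebraMap (Polynomial ℚ) (RatFunc ℚ)) (Polynomial.X ^ n) =
      (algebraMap (Polynomial ℚ) (RatFunc ℚ)) 1 := by
    simpa [qq, RatFunc.algebraMap_X] using h
  have h3 := RatFunc.algebraMap_injective ℚ h2
  have h4 := congrArg Polynomial.natDegree h3
  simp at h4
  omega

/-- A base which is not a root of unity. -/
def Good (v : F) : Prop := v ≠ 0 ∧ ∀ n : ℕ, 0 < n → v ^ n ≠ 1

theorem good_qq : Good qq := ⟨qq_ne, qq_pow_ne_one⟩

theorem good_qq2 : Good (qq ^ 2) := ⟨pow_ne_zero _ qq_ne, fun n hn => by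
  rw [← pow_mul]; exact qq_pow_ne_one _ (by omega)⟩

theorem Good.sub_ne {v : F} (hv : Good v) (n : ℕ) (hn : 0 < n) :
    v ^ (n : ℤ) - v ^ (-(n : ℤ)) ≠ 0 := by
  intro h
  have h1 : v ^ (n : ℤ) = v ^ (-(n : ℤ)) := sub_eq_zero.mp h
  have h2 : v ^ ((n + n : ℕ) : ℤ) = 1 := by
    push_cast
    rw [zpow_add₀ hv.1]
    nth_rewrite 2 [h1]
    rw [← zpow_add₀ hv.1]; simp
  rw [zpow_natCast] at h2
  exact hv.2 _ (by omega) h2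

theorem Good.den_ne {v : F} (hv : Good v) : v - v⁻¹ ≠ 0 := by
  have := hv.sub_ne 1 one_pos
  simpa using this

theorem Good.qint_ne {v : F} (hv : Good v) (n : ℕ) : qint v ((n : ℤ) + 1) ≠ 0 := by
  have := hv.sub_ne (n + 1) (by omega)
  push_cast at this
  exact div_ne_zero this hv.den_ne

theorem Good.qfact_ne {v : F} (hv : Good v) (n : ℕ) : qfact v n ≠ 0 := by
  unfold qfact
  exact Finset.prod_ne_zero_iff.mpr fun k _ => hv.qint_ne k

theorem qbinom_nat (v : F) (n : ℤ) (d : ℕ) :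
    qbinom v n (d : ℤ) = (∏ k ∈ range d, qint v (n - (k : ℤ))) / qfact v d := by
  unfold qbinom
  simp

theorem qbinom_nat0 (v : F) (n : ℤ) : qbinom v n ((0 : ℕ) : ℤ) = 1 := by
  rw [qbinom_nat]; simp [qfact]

theorem qint_zero (v : F) : qint v 0 = 0 := by simp [qint]

theorem qbinom_eq_zero (v : F) (n d : ℕ) (h : n < d) : qbinom v (n : ℤ) (d : ℤ) = 0 := by
  rw [qbinom_nat, Finset.prod_eq_zero (mem_range.mpr h) (by simp [qint_zero]), zero_div]

theorem qbinom_one_one {v : F} (hv : Good v) : qbinom v 1 ((1 : ℕ) : ℤ) = 1 := by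
  rw [qbinom_nat]
  have := hv.qint_ne 0
  simp [qfact] at this ⊢
  exact this

theorem prod_shift (v : F) (n : ℤ) (d : ℕ) :
    ∏ k ∈ range (d + 1), qint v (n + 1 - (k : ℤ)) =
      (∏ k ∈ range d, qint v (n - (k : ℤ))) * qint v (n + 1) := by
  rw [Finset.prod_range_succ']
  congr 1
  · refine Finset.prod_congr rfl fun k _ => ?_
    congr 1; push_cast; ring
  · simp

theorem qint_add {v : F} (hv : Good v) (n : ℤ) (d : ℤ) :
    qint v (n + 1) = v ^ (-(d + 1)) * qint v (n - d) + v ^ (n - d) * qint v (d + 1) := by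
  unfold qint
  rw [← mul_div_assoc, ← mul_div_assoc, ← add_div]
  congr 1
  simp only [mul_sub, ← zpow_add₀ hv.1]
  ring_nf

theorem qint_add' {v : F} (hv : Good v) (n : ℤ) (d : ℤ) :
    qint v (n + 1) = v ^ (d + 1) * qint v (n - d) + v ^ (-(n - d)) * qint v (d + 1) := by
  unfold qint
  rw [← mul_div_assoc, ← mul_div_assoc, ← add_div]
  congr 1
  simp only [mul_sub, ← zpow_add₀ hv.1]
  ring_nf

theorem pascal {v : F} (hv : Good v) (n : ℤ) (d : ℕ) :
    qbinom v (n + 1) ((d + 1 : ℕ) : ℤ) =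
      v ^ (-((d : ℤ) + 1)) * qbinom v n ((d + 1 : ℕ) : ℤ) + v ^ (n - d) * qbinom v n (d : ℤ) := by
  simp only [qbinom_nat]
  rw [prod_shift, qint_add hv n d, Finset.prod_range_succ]
  have h1 := hv.qint_ne d
  have h2 := hv.qfact_ne d
  have h3 : qfact v (d + 1) = qfact v d * qint v ((d : ℤ) + 1) := by
    unfold qfact; rw [Finset.prod_range_succ]
  rw [h3]
  generalize v ^ (-((d : ℤ) + 1)) = A
  generalize v ^ (n - (d : ℤ)) = B
  field_simp

theorem pascal' {v : F} (hv : Good v) (n : ℤ) (d : ℕ) :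
    qbinom v (n + 1) ((d + 1 : ℕ) : ℤ) =
      v ^ ((d : ℤ) + 1) * qbinom v n ((d + 1 : ℕ) : ℤ) + v ^ (-(n - d)) * qbinom v n (d : ℤ) := by
  simp only [qbinom_nat]
  rw [prod_shift, qint_add' hv n d, Finset.prod_range_succ]
  have h1 := hv.qint_ne d
  have h2 := hv.qfact_ne d
  have h3 : qfact v (d + 1) = qfact v d * qint v ((d : ℤ) + 1) := by
    unfold qfact; rw [Finset.prod_range_succ]
  rw [h3]
  generalize v ^ ((d : ℤ) + 1) = A
  generalize v ^ (-(n - (d : ℤ))) = B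
  field_simp

/-- twisted binomial -/
def tb (v : F) (p n : ℤ) (d : ℕ) : F := v ^ ((d : ℤ) * p) * qbinom v (n + p) (d : ℤ)

theorem tb_zero (v : F) (p n : ℤ) : tb v p n 0 = 1 := by
  unfold tb; rw [qbinom_nat0]; simp

theorem tb_eq_zero (v : F) (p n : ℤ) (k d : ℕ) (h : n + p = k) (hd : k < d) : tb v p n d = 0 := by
  unfold tb; rw [h, qbinom_eq_zero v k d hd, mul_zero]

theorem tb_one {v : F} (hv : Good v) (p n : ℤ) (h : n + p = 1) : tb v p n 1 = v ^ p := by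
  unfold tb; rw [h, qbinom_one_one hv]; simp

theorem tb_succ {v : F} (hv : Good v) (p n : ℤ) (d : ℕ) :
    tb v (p + 1) n (d + 1) = tb v p n (d + 1) + v ^ (n + 2 * p + 1) * tb v p n d := by
  unfold tb
  rw [← add_assoc, pascal hv, mul_add, ← mul_assoc, ← mul_assoc, ← mul_assoc, ← zpow_add₀ hv.1,
    ← zpow_add₀ hv.1, ← zpow_add₀ hv.1]
  push_cast
  ring_nf

/-- triple sum -/
def T (u : ℕ) (f : ℕ → ℕ → ℕ → F) : F :=
  ∑ x ∈ antidiagonal u, ∑ y ∈ antidiagonal x.2, f x.1 y.1 y.2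

theorem T_eq (u : ℕ) (f : ℕ → ℕ → ℕ → F) :
    T u f = ∑ c ∈ range (u + 1), ∑ e ∈ range (u + 1 - c), f c e (u - c - e) := by
  unfold T
  rw [Finset.Nat.sum_antidiagonal_eq_sum_range_succ_mk]
  refine Finset.sum_congr rfl fun c hc => ?_
  rw [Finset.Nat.sum_antidiagonal_eq_sum_range_succ_mk]
  have : u + 1 - c = (u - c) + 1 := by have := mem_range.mp hc; omega
  rw [this]

theorem T_c (u : ℕ) (f : ℕ → ℕ → ℕ → F) (h : ∀ e r, f 0 e r = 0) :
    T (u + 1) f = T u (fun c e r => f (c + 1) e r) := by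
  unfold T
  rw [Finset.Nat.sum_antidiagonal_succ]
  simp [h]

theorem T_e (u : ℕ) (f : ℕ → ℕ → ℕ → F) (h : ∀ c r, f c 0 r = 0) :
    T (u + 1) f = T u (fun c e r => f c (e + 1) r) := by
  unfold T
  rw [Finset.Nat.sum_antidiagonal_succ']
  simp [h, Finset.Nat.sum_antidiagonal_succ]

theorem T_r (u : ℕ) (f : ℕ → ℕ → ℕ → F) (h : ∀ c e, f c e 0 = 0) :
    T (u + 1) f = T u (fun c e r => f c e (r + 1)) := by
  unfold T
  rw [Finset.Nat.sum_antidiagonal_succ']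
  simp [h, Finset.Nat.sum_antidiagonal_succ']

theorem T_congr (u : ℕ) (f g : ℕ → ℕ → ℕ → F) (h : ∀ c e r, c + e + r = u → f c e r = g c e r) :
    T u f = T u g := by
  unfold T
  refine Finset.sum_congr rfl fun x hx => Finset.sum_congr rfl fun y hy => h _ _ _ ?_
  have := mem_antidiagonal.mp hx
  have := mem_antidiagonal.mp hy
  omega

theorem T_sub (u : ℕ) (f g : ℕ → ℕ → ℕ → F) :
    T u f - T u g = T u (fun c e r => f c e r - g c e r) := by
  unfold T; simp only [Finset.sum_sub_distrib]

theorem T_mul (u : ℕ) (k : F) (f : ℕ → ℕ → ℕ → F) :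
    T u (fun c e r => k * f c e r) = k * T u f := by
  unfold T; simp only [Finset.mul_sum]

theorem T_zero (u : ℕ) (f : ℕ → ℕ → ℕ → F) (h : ∀ c e r, c + e + r = u → f c e r = 0) :
    T u f = 0 := by
  rw [T_congr u f (fun _ _ _ => 0) h]; simp [T]

/-- the summand -/
def f (N : ℤ) (u : ℕ) (p0 p1 p2 : ℤ) (c e r : ℕ) : F :=
  if Even (N - r) then
    qq ^ (-(u : ℤ) * (c + e) + 2 * c) * tb qq p0 N r * tb (qq ^ 2) p1 ((N - r) / 2) c
      * tb (qq ^ 2) p2 ((N - r) / 2) e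
  else
    -(qq ^ (-((u : ℤ) - 1) * (c + e)) * tb qq p0 N r * tb (qq ^ 2) p1 (1 + (N - r - 1) / 2) c
      * tb (qq ^ 2) p2 ((N - r - 1) / 2) e)

/-- the inner sum -/
def H (N : ℤ) (u : ℕ) (p0 p1 p2 : ℤ) : F := T u (f N u p0 p1 p2)

theorem qq2_zpow (k : ℤ) : (qq ^ 2) ^ k = qq ^ (2 * k) := by
  rw [zpow_mul]; norm_cast

theorem f_even (N : ℤ) (u : ℕ) (p0 p1 p2 : ℤ) (c e r : ℕ) (m : ℤ) (h : N - r = 2 * m) :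
    f N u p0 p1 p2 c e r = qq ^ (-(u : ℤ) * (c + e) + 2 * c) * tb qq p0 N r * tb (qq ^ 2) p1 m c
      * tb (qq ^ 2) p2 m e := by
  unfold f
  rw [if_pos (by rw [h]; exact even_two_mul m), h]
  simp

theorem f_odd (N : ℤ) (u : ℕ) (p0 p1 p2 : ℤ) (c e r : ℕ) (m : ℤ) (h : N - r = 2 * m + 1) :
    f N u p0 p1 p2 c e r = -(qq ^ (-((u : ℤ) - 1) * (c + e)) * tb qq p0 N r
      * tb (qq ^ 2) p1 (1 + m) c * tb (qq ^ 2) p2 m e) := by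
  unfold f
  rw [if_neg (by rw [h]; simp), h]
  simp

theorem zz (a b : ℤ) : qq ^ a * qq ^ b = qq ^ (a + b) := (zpow_add₀ qq_ne a b).symm

theorem H_p2 (N : ℤ) (u : ℕ) (p0 p1 p2 : ℤ) :
    H N (u + 1) p0 p1 (p2 + 1) - H N (u + 1) p0 p1 p2 =
      qq ^ (4 * p2 + 1 + N - 2 * u) * H N u p0 p1 p2 := by
  unfold H
  rw [T_sub, ← T_mul, T_e]
  · refine T_congr _ _ _ fun c e r hu => ?_
    subst hu
    rcases Int.even_or_odd' (N - r) with ⟨m, hm | hm⟩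
    · simp only [f_even _ _ _ _ _ _ _ _ m hm, tb_succ good_qq2, qq2_zpow]
      obtain rfl : N = 2 * m + r := by omega
      have : qq ^ (-((c + e + r + 1 : ℕ) : ℤ) * (c + (e + 1 : ℕ)) + 2 * c)
          * qq ^ (2 * (m + 2 * p2 + 1)) =
          qq ^ (4 * p2 + 1 + (2 * m + r) - 2 * (c + e + r : ℕ))
          * qq ^ (-((c + e + r : ℕ) : ℤ) * (c + e) + 2 * c) := by
        rw [zz, zz]; congr 1; push_cast; ring
      linear_combination (tb qq p0 (2 * m + r) r * tb (qq ^ 2) p1 m c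
        * tb (qq ^ 2) p2 m e) * this
    · simp only [f_odd _ _ _ _ _ _ _ _ m hm, tb_succ good_qq2, qq2_zpow]
      obtain rfl : N = 2 * m + 1 + r := by omega
      have : qq ^ (-(((c + e + r + 1 : ℕ) : ℤ) - 1) * (c + (e + 1 : ℕ)))
          * qq ^ (2 * (m + 2 * p2 + 1)) =
          qq ^ (4 * p2 + 1 + (2 * m + 1 + r) - 2 * (c + e + r : ℕ))
          * qq ^ (-(((c + e + r : ℕ) : ℤ) - 1) * (c + e)) := by
        rw [zz, zz]; congr 1; push_cast; ring
      linear_combination -(tb qq p0 (2 * m + 1 + r) r * tb (qq ^ 2) p1 (1 + m) c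
        * tb (qq ^ 2) p2 m e) * this
  · intro c r
    simp [f, tb_zero]

theorem H_p1 (N : ℤ) (u : ℕ) (p0 p1 p2 : ℤ) :
    H N (u + 1) p0 (p1 + 1) p2 - H N (u + 1) p0 p1 p2 =
      qq ^ (4 * p1 + 3 + N - 2 * u) * H N u p0 p1 p2 := by
  unfold H
  rw [T_sub, ← T_mul, T_c]
  · refine T_congr _ _ _ fun c e r hu => ?_
    subst hu
    rcases Int.even_or_odd' (N - r) with ⟨m, hm | hm⟩
    · simp only [f_even _ _ _ _ _ _ _ _ m hm, tb_succ good_qq2, qq2_zpow]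
      obtain rfl : N = 2 * m + r := by omega
      have : qq ^ (-((c + e + r + 1 : ℕ) : ℤ) * ((c + 1 : ℕ) + e) + 2 * (c + 1 : ℕ))
          * qq ^ (2 * (m + 2 * p1 + 1)) =
          qq ^ (4 * p1 + 3 + (2 * m + r) - 2 * (c + e + r : ℕ))
          * qq ^ (-((c + e + r : ℕ) : ℤ) * (c + e) + 2 * c) := by
        rw [zz, zz]; congr 1; push_cast; ring
      linear_combination (tb qq p0 (2 * m + r) r * tb (qq ^ 2) p1 m c
        * tb (qq ^ 2) p2 m e) * this
    · simp only [f_odd _ _ _ _ _ _ _ _ m hm, tb_succ good_qq2, qq2_zpow]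
      obtain rfl : N = 2 * m + 1 + r := by omega
      have : qq ^ (-(((c + e + r + 1 : ℕ) : ℤ) - 1) * ((c + 1 : ℕ) + e))
          * qq ^ (2 * (1 + m + 2 * p1 + 1)) =
          qq ^ (4 * p1 + 3 + (2 * m + 1 + r) - 2 * (c + e + r : ℕ))
          * qq ^ (-(((c + e + r : ℕ) : ℤ) - 1) * (c + e)) := by
        rw [zz, zz]; congr 1; push_cast; ring
      linear_combination -(tb qq p0 (2 * m + 1 + r) r * tb (qq ^ 2) p1 (1 + m) c
        * tb (qq ^ 2) p2 m e) * this
  · intro c r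
    simp [f, tb_zero]

theorem tb_shift (p N : ℤ) (r : ℕ) : tb qq (p + 1) (N - 1) r = qq ^ (r : ℤ) * tb qq p N r := by
  unfold tb
  rw [← mul_assoc, zz]
  ring_nf

theorem H_p0 (N : ℤ) (u : ℕ) (p0 p1 p2 : ℤ) :
    H N (u + 1) (p0 + 1) p1 p2 - H N (u + 1) p0 p1 p2 =
      qq ^ (2 * p0 + 1 + N - u) * H (N - 1) u (p0 + 1) p1 p2 := by
  unfold H
  rw [T_sub, ← T_mul, T_r]
  · refine T_congr _ _ _ fun c e r hu => ?_
    subst hu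
    rcases Int.even_or_odd' (N - (r + 1 : ℕ)) with ⟨m, hm | hm⟩
    · have hm' : N - 1 - r = 2 * m := by push_cast at hm; omega
      simp only [f_even _ _ _ _ _ _ _ _ m hm, f_even _ _ _ _ _ _ _ _ m hm', tb_succ good_qq,
        tb_shift]
      have : qq ^ (-((c + e + r + 1 : ℕ) : ℤ) * (c + e) + 2 * c)
          * qq ^ (N + 2 * p0 + 1) =
          qq ^ (2 * p0 + 1 + N - (c + e + r : ℕ))
          * (qq ^ (-((c + e + r : ℕ) : ℤ) * (c + e) + 2 * c) * qq ^ (r : ℤ)) := by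
        rw [zz, zz, zz]; congr 1; push_cast; ring
      linear_combination (tb qq p0 N r * tb (qq ^ 2) p1 m c
        * tb (qq ^ 2) p2 m e) * this
    · have hm' : N - 1 - r = 2 * m + 1 := by push_cast at hm; omega
      simp only [f_odd _ _ _ _ _ _ _ _ m hm, f_odd _ _ _ _ _ _ _ _ m hm', tb_succ good_qq,
        tb_shift]
      have : qq ^ (-(((c + e + r + 1 : ℕ) : ℤ) - 1) * (c + e))
          * qq ^ (N + 2 * p0 + 1) =
          qq ^ (2 * p0 + 1 + N - (c + e + r : ℕ))
          * (qq ^ (-(((c + e + r : ℕ) : ℤ) - 1) * (c + e)) * qq ^ (r : ℤ)) := by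
        rw [zz, zz, zz]; congr 1; push_cast; ring
      linear_combination -(tb qq p0 N r * tb (qq ^ 2) p1 (1 + m) c
        * tb (qq ^ 2) p2 m e) * this
  · intro c r
    simp [f, tb_zero]

/-- the combination for `ℓ = 1` -/
def D (N : ℤ) (u : ℕ) (p0 p1 p2 : ℤ) : F := H (N + 1) u p0 p1 p2 + qq ^ (u : ℤ) * H N u p0 p1 p2

theorem const_of_step (g : ℤ → F) (h : ∀ x, g (x + 1) = g x) (x y : ℤ) : g x = g y := by
  have key : ∀ x, g x = g 0 := by
    intro x
    induction x using Int.induction_on with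
    | zero => rfl
    | succ i ih => rw [h, ih]
    | pred i ih => rw [← ih, ← h (-(i : ℤ) - 1)]; congr 1; ring
  rw [key x, key y]

theorem D_base (u : ℕ) (N : ℤ) : ∃ p0 p1 p2, D N (u + 1) p0 p1 p2 = 0 := by
  rcases Int.even_or_odd' N with ⟨m, hm | hm⟩
  · refine ⟨-N, -m, -m, ?_⟩
    have h0 : H N (u + 1) (-N) (-m) (-m) = 0 := by
      refine T_zero _ _ fun c e r hu => ?_
      rcases Nat.eq_zero_or_pos r with rfl | hr
      · rw [f_even _ _ _ _ _ _ _ _ m (by simpa using hm)]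
        rcases Nat.eq_zero_or_pos c with rfl | hc
        · rw [tb_eq_zero _ _ _ 0 e (by simp) (by omega), mul_zero]
        · rw [tb_eq_zero _ _ _ 0 c (by simp) (by omega), mul_zero, zero_mul]
      · unfold f
        rw [tb_eq_zero _ _ _ 0 r (by simp) (by omega)]
        simp
    have h1 : H (N + 1) (u + 1) (-N) (-m) (-m) = 0 := by
      rcases Nat.eq_zero_or_pos u with rfl | hu0
      · have e1 : f (N + 1) 1 (-N) (-m) (-m) 0 0 1 = qq ^ (-N) := by
          rw [f_even _ _ _ _ _ _ _ _ m (by push_cast; omega), tb_zero,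
            tb_one good_qq _ _ (by ring)]
          simp
        have e2 : f (N + 1) 1 (-N) (-m) (-m) 0 1 0 = 0 := by
          rw [f_odd _ _ _ _ _ _ _ _ m (by push_cast; omega),
            tb_eq_zero _ (-m) m 0 1 (by simp) (by omega)]
          simp
        have e3 : f (N + 1) 1 (-N) (-m) (-m) 1 0 0 = -qq ^ (-N) := by
          rw [f_odd _ _ _ _ _ _ _ _ m (by push_cast; omega), tb_zero, tb_zero,
            tb_one good_qq2 _ _ (by ring), qq2_zpow, hm]
          simp
        unfold H T
        simp [Finset.Nat.antidiagonal_succ, e1, e2, e3]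
      · refine T_zero _ _ fun c e r hu => ?_
        rcases Nat.lt_or_ge 1 r with hr | hr
        · unfold f
          rw [tb_eq_zero qq _ _ 1 r (by push_cast; ring) hr]
          simp
        · interval_cases r
          · rw [f_odd _ _ _ _ _ _ _ _ m (by push_cast; omega)]
            rcases Nat.eq_zero_or_pos e with rfl | he
            · rw [tb_eq_zero _ _ (1 + m) 1 c (by push_cast; ring) (by omega)]; simp
            · rw [tb_eq_zero _ _ m 0 e (by simp) (by omega)]; simp
          · rw [f_even _ _ _ _ _ _ _ _ m (by push_cast; omega)]
            rcases Nat.eq_zero_or_pos e with rfl | he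
            · rw [tb_eq_zero _ _ m 0 c (by simp) (by omega)]; simp
            · rw [tb_eq_zero _ _ m 0 e (by simp) (by omega)]; simp
    unfold D; rw [h0, h1]; simp
  · refine ⟨-N, -(1 + m), -m, ?_⟩
    have h0 : H N (u + 1) (-N) (-(1 + m)) (-m) = 0 := by
      refine T_zero _ _ fun c e r hu => ?_
      rcases Nat.eq_zero_or_pos r with rfl | hr
      · rw [f_odd _ _ _ _ _ _ _ _ m (by simpa using hm)]
        rcases Nat.eq_zero_or_pos c with rfl | hc
        · rw [tb_eq_zero _ _ m 0 e (by simp) (by omega)]; simp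
        · rw [tb_eq_zero _ _ (1 + m) 0 c (by simp) (by omega)]; simp
      · unfold f
        rw [tb_eq_zero _ _ _ 0 r (by simp) (by omega)]
        simp
    have h1 : H (N + 1) (u + 1) (-N) (-(1 + m)) (-m) = 0 := by
      rcases Nat.eq_zero_or_pos u with rfl | hu0
      · have e1 : f (N + 1) 1 (-N) (-(1 + m)) (-m) 0 0 1 = -qq ^ (-N) := by
          rw [f_odd _ _ _ _ _ _ _ _ m (by push_cast; omega), tb_zero, tb_zero,
            tb_one good_qq _ _ (by ring)]
          simp
        have e2 : f (N + 1) 1 (-N) (-(1 + m)) (-m) 0 1 0 = qq ^ (-N) := by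
          rw [f_even _ _ _ _ _ _ _ _ (m + 1) (by push_cast; omega), tb_zero, tb_zero,
            tb_one good_qq2 _ _ (by ring), qq2_zpow, mul_one, mul_one, zz, hm]
          congr 1; push_cast; ring
        have e3 : f (N + 1) 1 (-N) (-(1 + m)) (-m) 1 0 0 = 0 := by
          rw [f_even _ _ _ _ _ _ _ _ (m + 1) (by push_cast; omega),
            tb_eq_zero _ (-(1 + m)) (m + 1) 0 1 (by push_cast; ring) (by omega)]
          simp
        unfold H T
        simp [Finset.Nat.antidiagonal_succ, -neg_add_rev, e1, e2, e3]
      · refine T_zero _ _ fun c e r hu => ?_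
        rcases Nat.lt_or_ge 1 r with hr | hr
        · unfold f
          rw [tb_eq_zero qq _ _ 1 r (by push_cast; ring) hr]
          simp
        · interval_cases r
          · rw [f_even _ _ _ _ _ _ _ _ (m + 1) (by push_cast; omega)]
            rcases Nat.eq_zero_or_pos c with rfl | hc
            · rw [tb_eq_zero _ (-m) (m + 1) 1 e (by push_cast; ring) (by omega)]; simp
            · rw [tb_eq_zero _ (-(1 + m)) (m + 1) 0 c (by push_cast; ring) (by omega)]; simp
          · rw [f_odd _ _ _ _ _ _ _ _ m (by push_cast; omega)]
            rcases Nat.eq_zero_or_pos e with rfl | he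
            · rw [tb_eq_zero _ _ (1 + m) 0 c (by simp) (by omega)]; simp
            · rw [tb_eq_zero _ _ m 0 e (by simp) (by omega)]; simp
    unfold D; rw [h0, h1]; simp

theorem D_zero (u : ℕ) : ∀ (N p0 p1 p2 : ℤ), D N u p0 p1 p2 = 0 := by
  induction u with
  | zero =>
    intro N p0 p1 p2
    unfold D H T f
    rcases Int.even_or_odd N with h | h
    · have h' : ¬ Odd N := Int.not_odd_iff_even.mpr h
      simp [h, h', tb_zero, Int.even_add_one]
    · have h' : ¬ Even N := Int.not_even_iff_odd.mpr h
      simp [h, h', tb_zero, Int.even_add_one]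
  | succ u ih =>
    intro N p0 p1 p2
    have s2 : ∀ p0 p1 p2, D N (u + 1) p0 p1 (p2 + 1) = D N (u + 1) p0 p1 p2 := by
      intro p0 p1 p2
      have h := ih N p0 p1 p2
      have a := H_p2 (N + 1) u p0 p1 p2
      have b := H_p2 N u p0 p1 p2
      have k : qq ^ ((u + 1 : ℕ) : ℤ) * qq ^ (4 * p2 + 1 + N - 2 * u) =
        qq ^ (4 * p2 + 1 + (N + 1) - 2 * u) * qq ^ (u : ℤ) := by
        rw [zz, zz]; congr 1; push_cast; ring
      unfold D at h ⊢
      linear_combination a + qq ^ ((u + 1 : ℕ) : ℤ) * b + H N u p0 p1 p2 * k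
        + qq ^ (4 * p2 + 1 + (N + 1) - 2 * u) * h
    have s1 : ∀ p0 p1 p2, D N (u + 1) p0 (p1 + 1) p2 = D N (u + 1) p0 p1 p2 := by
      intro p0 p1 p2
      have h := ih N p0 p1 p2
      have a := H_p1 (N + 1) u p0 p1 p2
      have b := H_p1 N u p0 p1 p2
      have k : qq ^ ((u + 1 : ℕ) : ℤ) * qq ^ (4 * p1 + 3 + N - 2 * u) =
        qq ^ (4 * p1 + 3 + (N + 1) - 2 * u) * qq ^ (u : ℤ) := by
        rw [zz, zz]; congr 1; push_cast; ring
      unfold D at h ⊢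
      linear_combination a + qq ^ ((u + 1 : ℕ) : ℤ) * b + H N u p0 p1 p2 * k
        + qq ^ (4 * p1 + 3 + (N + 1) - 2 * u) * h
    have s0 : ∀ p0 p1 p2, D N (u + 1) (p0 + 1) p1 p2 = D N (u + 1) p0 p1 p2 := by
      intro p0 p1 p2
      have h := ih (N - 1) (p0 + 1) p1 p2
      have a := H_p0 (N + 1) u p0 p1 p2
      have b := H_p0 N u p0 p1 p2
      have k : qq ^ ((u + 1 : ℕ) : ℤ) * qq ^ (2 * p0 + 1 + N - u) =
        qq ^ (2 * p0 + 1 + (N + 1) - u) * qq ^ (u : ℤ) := by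
        rw [zz, zz]; congr 1; push_cast; ring
      unfold D at h ⊢
      rw [sub_add_cancel] at h
      rw [add_sub_cancel_right] at a
      linear_combination a + qq ^ ((u + 1 : ℕ) : ℤ) * b + H (N - 1) u (p0 + 1) p1 p2 * k
        + qq ^ (2 * p0 + 1 + (N + 1) - u) * h
    obtain ⟨a0, a1, a2, h⟩ := D_base u N
    rw [const_of_step (fun x => D N (u + 1) x p1 p2) (fun x => s0 x p1 p2) p0 a0,
      const_of_step (fun x => D N (u + 1) a0 x p2) (fun x => s1 a0 x p2) p1 a1,
      const_of_step (fun x => D N (u + 1) a0 a1 x) (fun x => s2 a0 a1 x) p2 a2, h]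

/-- the outer sum -/
def S (h : ℤ → F) (u ℓ : ℕ) (w : ℤ) : F :=
  ∑ t ∈ range (ℓ + 1), qq ^ (-(t : ℤ) * ((ℓ : ℤ) + u - 1)) * qbinom qq ℓ t * h (w + t)

theorem S_succ (h : ℤ → F) (u ℓ : ℕ) (w : ℤ) :
    S h u (ℓ + 1) w = S h u ℓ w + qq ^ (-(2 * (ℓ : ℤ) + u)) * S h u ℓ (w + 1) := by
  have e : S h u ℓ w = ∑ t ∈ range (ℓ + 1 + 1),
      qq ^ (-(t : ℤ) * ((ℓ : ℤ) + u - 1)) * qbinom qq ℓ t * h (w + t) := by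
    rw [Finset.sum_range_succ, qbinom_eq_zero qq ℓ (ℓ + 1) (by omega)]
    simp [S]
  rw [e]
  unfold S
  rw [Finset.sum_range_succ', Finset.sum_range_succ' _ (ℓ + 1), Finset.mul_sum, qbinom_nat0,
    qbinom_nat0]
  rw [add_right_comm, ← Finset.sum_add_distrib]
  congr 1
  · refine Finset.sum_congr rfl fun t _ => ?_
    have hp := pascal' good_qq ℓ t
    have k1 : qq ^ (-((t + 1 : ℕ) : ℤ) * (((ℓ + 1 : ℕ) : ℤ) + u - 1)) * qq ^ ((t : ℤ) + 1) =
      qq ^ (-((t + 1 : ℕ) : ℤ) * ((ℓ : ℤ) + u - 1)) := by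
      rw [zz]; congr 1; push_cast; ring
    have k2 : qq ^ (-((t + 1 : ℕ) : ℤ) * (((ℓ + 1 : ℕ) : ℤ) + u - 1)) * qq ^ (-((ℓ : ℤ) - t)) =
      qq ^ (-(2 * (ℓ : ℤ) + u)) * qq ^ (-(t : ℤ) * ((ℓ : ℤ) + u - 1)) := by
      rw [zz, zz]; congr 1; push_cast; ring
    have k3 : w + 1 + (t : ℤ) = w + ((t + 1 : ℕ) : ℤ) := by push_cast; ring
    have k4 : ((ℓ + 1 : ℕ) : ℤ) = (ℓ : ℤ) + 1 := by push_cast; ring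
    rw [k3]
    rw [k4] at k1 k2 ⊢
    rw [hp]
    linear_combination (qbinom qq ℓ ((t + 1 : ℕ) : ℤ) * h (w + ((t + 1 : ℕ) : ℤ))) * k1 +
      (qbinom qq ℓ (t : ℤ) * h (w + ((t + 1 : ℕ) : ℤ))) * k2
  · simp

theorem S_zero (h : ℤ → F) (u : ℕ) (hh : ∀ N, h (N + 1) + qq ^ (u : ℤ) * h N = 0) (ℓ : ℕ) :
    ∀ w, S h u (ℓ + 1) w = 0 := by
  induction ℓ with
  | zero =>
    intro w
    rw [S_succ]
    have k : qq ^ (-(2 * ((0 : ℕ) : ℤ) + u)) * qq ^ (u : ℤ) = 1 := by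
      rw [zz]; simp
    have s : ∀ w, S h u 0 w = h w := by
      intro w
      unfold S
      rw [zero_add, Finset.sum_range_one, qbinom_nat0]; simp
    rw [s, s]
    linear_combination qq ^ (-(2 * ((0 : ℕ) : ℤ) + u)) * hh w - h w * k
  | succ ℓ ih =>
    intro w
    rw [S_succ, ih, ih]; simp

theorem G_eq (w p0 p1 p2 : ℤ) (u ℓ : ℕ) :
    G w u ℓ p0 p1 p2 = (-1 : F) ^ w * qq ^ ((u : ℤ) ^ 2 - w * (u : ℤ) + (ℓ : ℤ) * (u : ℤ)) *
      S (fun N => H N u p0 p1 p2) u ℓ w := by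
  unfold G
  congr 1
  unfold S H
  simp only [T_eq, Finset.mul_sum]
  rw [Finset.sum_comm, ← Finset.sum_sub_distrib]
  refine Finset.sum_congr rfl fun c _ => ?_
  conv_rhs => rw [Finset.sum_comm]
  rw [← Finset.sum_sub_distrib]
  refine Finset.sum_congr rfl fun e _ => ?_
  rw [← Finset.sum_sub_distrib]
  refine Finset.sum_congr rfl fun t _ => ?_
  generalize u - c - e = r
  have hc : (t : ℤ) + w - r = w + t - r := by ring
  simp only [hc]
  unfold f
  by_cases h : Even (w + (t : ℤ) - r)
  · simp only [h, not_true_eq_false, if_true, if_false, sub_zero, tb, qq2_zpow]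
    have k : qq ^ (-(t : ℤ) * ((ℓ : ℤ) + (u : ℤ) - 1) - (u : ℤ) * ((c : ℤ) + (e : ℤ)) + 2 * (c : ℤ)
               + (r : ℤ) * p0 + 2 * (c : ℤ) * p1 + 2 * (e : ℤ) * p2) =
        qq ^ (-(t : ℤ) * ((ℓ : ℤ) + u - 1)) * (qq ^ (-(u : ℤ) * (c + e) + 2 * c) *
          (qq ^ ((r : ℤ) * p0) * (qq ^ (2 * ((c : ℤ) * p1)) * qq ^ (2 * ((e : ℤ) * p2))))) := by
      rw [zz, zz, zz, zz]; congr 1; ring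
    rw [k]; ring
  · simp only [h, not_false_eq_true, if_true, if_false, zero_sub, tb, qq2_zpow]
    have k : qq ^ (-(t : ℤ) * ((ℓ : ℤ) + (u : ℤ) - 1) - ((u : ℤ) - 1) * ((c : ℤ) + (e : ℤ))
               + (r : ℤ) * p0 + 2 * (c : ℤ) * p1 + 2 * (e : ℤ) * p2) =
        qq ^ (-(t : ℤ) * ((ℓ : ℤ) + u - 1)) * (qq ^ (-((u : ℤ) - 1) * (c + e)) *
          (qq ^ ((r : ℤ) * p0) * (qq ^ (2 * ((c : ℤ) * p1)) * qq ^ (2 * ((e : ℤ) * p2))))) := by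
      rw [zz, zz, zz, zz]; congr 1; ring
    rw [k]; ring

/-- `G(w,u,ℓ;p0,p1,p2) = 0` for all integers `w, p0, p1, p2`, every positive integer `ℓ`,
and every nonnegative integer `u`. -/
theorem G_eq_zero (w p0 p1 p2 : ℤ) (u ℓ : ℕ) (hℓ : 0 < ℓ) :
    G w u ℓ p0 p1 p2 = 0 := by
  obtain ⟨ℓ, rfl⟩ := Nat.exists_eq_add_of_lt hℓ
  rw [G_eq, zero_add, S_zero _ u (fun N => D_zero u N p0 p1 p2), mul_zero]

end
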